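/- arXiv:1907.05111 — 2 statements merged into one kernel-verified Lean document; each statement's English description precedes it below -/
import Mathlib

section
/- Let (φ_n), (ψ_n) be biorthogonal families in ℋ with (ψ_n) complete, and let X, Y be bounded operators on ℋ with X φ_0 = c_0 φ_0, X φ_n = c_n φ_n + d_n φ_{n−1} (n ≥ 1), Y ψ_0 = c'_0 ψ_0, and Y ψ_n = c'_n ψ_n + d'_n ψ_{n−1} (n ≥ 1). Then H := Y† X satisfies, for every n ≥ 1, H φ_n = d_n conj(c'_{n−1}) φ_{n−1} + (c_n conj(c'_n) + d_n conj(d'_n)) φ_n + c_n conj(d'_{n+1}) φ_{n+1}, and H φ_0 = c_0 conj(c'_0) φ_0 + c_0 conj(d'_1) φ_1. In particular, H is (φ,ψ)-tridiagonal with a_n = c_n conj(c'_n) + d_n conj(d'_n) (a_0 = c_0 conj(c'_0)), b'_{n−1} = d_n conj(c'_{n−1}), and b_{n+1} = c_n conj(d'_{n+1}). -/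
local notation "⟪" x ", " y "⟫" => @inner ℂ _ _ x y

/-!
`Y` is upper bidiagonal along `ψ`, so its adjoint is lower bidiagonal along the dual family `φ`:
both sides of the claimed formula have the same inner product with every `ψ n`, and completeness of
`ψ` makes them equal. A lower bidiagonal map after an upper bidiagonal one is tridiagonal. The
matrix entries of `Y† X` are read off directly from `⟪ψ n, Y† X (φ m)⟫ = ⟪Y (ψ n), X (φ m)⟫`.
-/

section Bidiagonal

variable {R M : Type*} [CommSemiring R] [AddCommMonoid M] [Module R M]

/-- `X` is upper bidiagonal along `φ`, with diagonal `c` and superdiagonal `d`: it maps `φ n` into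
the span of `φ n` and `φ (n - 1)`. The coefficient `d n` belongs to column `n`, so `d 0` is
irrelevant. -/
structure IsUpperBidiagonal (X : M →ₗ[R] M) (φ : ℕ → M) (c d : ℕ → R) : Prop where
  apply_zero : X (φ 0) = c 0 • φ 0
  apply_succ : ∀ n, X (φ (n + 1)) = c (n + 1) • φ (n + 1) + d (n + 1) • φ n

/-- `Z` is lower bidiagonal along `φ`, with diagonal `e` and subdiagonal `f`: it maps `φ n` into the
span of `φ n` and `φ (n + 1)`. The coefficient `f n` belongs to row `n`, so that transposition
exchanges `f` with the `d` of `IsUpperBidiagonal`. -/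
def IsLowerBidiagonal (Z : M →ₗ[R] M) (φ : ℕ → M) (e f : ℕ → R) : Prop :=
  ∀ n, Z (φ n) = e n • φ n + f (n + 1) • φ (n + 1)

variable {X Z : M →ₗ[R] M} {φ : ℕ → M} {c d e f : ℕ → R}

theorem IsLowerBidiagonal.comp_apply_zero (hZ : IsLowerBidiagonal Z φ e f)
    (hX : IsUpperBidiagonal X φ c d) :
    (Z ∘ₗ X) (φ 0) = (c 0 * e 0) • φ 0 + (c 0 * f 1) • φ 1 := by
  rw [LinearMap.comp_apply, hX.apply_zero, map_smul, hZ 0]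
  module

theorem IsLowerBidiagonal.comp_apply_succ (hZ : IsLowerBidiagonal Z φ e f)
    (hX : IsUpperBidiagonal X φ c d) (n : ℕ) :
    (Z ∘ₗ X) (φ (n + 1)) = (d (n + 1) * e n) • φ n +
      (c (n + 1) * e (n + 1) + d (n + 1) * f (n + 1)) • φ (n + 1) +
      (c (n + 1) * f (n + 2)) • φ (n + 2) := by
  rw [LinearMap.comp_apply, hX.apply_succ, map_add, map_smul, map_smul, hZ n, hZ (n + 1)]
  module

end Bidiagonal

section Biorthogonal

open scoped InnerProductSpace ComplexConjugate

variable {𝕜 E : Type*} [RCLike 𝕜] [NormedAddCommGroup E] [InnerProductSpace 𝕜 E]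

variable (𝕜) in
/-- The families `φ` and `ψ` are biorthogonal: `⟪φ i, ψ j⟫ = δ i j`. -/
def Biorthogonal {ι : Type*} [DecidableEq ι] (φ ψ : ι → E) : Prop :=
  ∀ i j, ⟪φ i, ψ j⟫_𝕜 = if i = j then 1 else 0

variable (𝕜) in
/-- The family `ψ` is complete, in the sense that only `0` is orthogonal to all its members. -/
def IsCompleteFamily {ι : Type*} (ψ : ι → E) : Prop :=
  ∀ x : E, (∀ i, ⟪ψ i, x⟫_𝕜 = 0) → x = 0

/-- `H` is `(φ, ψ)`-tridiagonal, with diagonal `a`, subdiagonal `b` and superdiagonal `b'`, all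
indexed by the row `n` of the matrix `⟪ψ n, H (φ m)⟫`. -/
def IsTridiagonal (H : E →ₗ[𝕜] E) (φ ψ : ℕ → E) (b a b' : ℕ → 𝕜) : Prop :=
  ∀ n m, ⟪ψ n, H (φ m)⟫_𝕜 =
    (if n = m + 1 then b n else 0) + (if n = m then a n else 0) + (if m = n + 1 then b' n else 0)

theorem Biorthogonal.symm {ι : Type*} [DecidableEq ι] {φ ψ : ι → E} (h : Biorthogonal 𝕜 φ ψ) :
    Biorthogonal 𝕜 ψ φ := fun i j => by
  rw [← inner_conj_symm, h j i, apply_ite conj, map_one, map_zero]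
  simp only [eq_comm]

theorem IsCompleteFamily.ext {ι : Type*} {ψ : ι → E} (hψ : IsCompleteFamily 𝕜 ψ) {x y : E}
    (h : ∀ i, ⟪ψ i, x⟫_𝕜 = ⟪ψ i, y⟫_𝕜) : x = y :=
  sub_eq_zero.mp <| hψ _ fun i => by rw [inner_sub_right, h i, sub_self]

variable {X Y Z : E →ₗ[𝕜] E} {φ ψ : ℕ → E} {c d c' d' : ℕ → 𝕜}

theorem IsUpperBidiagonal.inner_apply (hY : IsUpperBidiagonal Y ψ c' d')
    (hbi : Biorthogonal 𝕜 ψ φ) (n m : ℕ) :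
    ⟪Y (ψ n), φ m⟫_𝕜 =
      (if n = m then conj (c' n) else 0) + (if n = m + 1 then conj (d' n) else 0) := by
  cases n with
  | zero => simp [hY.apply_zero, inner_smul_left, hbi 0 m]
  | succ n => simp [hY.apply_succ, inner_add_left, inner_smul_left, hbi _ m]

theorem IsUpperBidiagonal.isLowerBidiagonal_adjoint (hY : IsUpperBidiagonal Y ψ c' d')
    (hadj : ∀ x y, ⟪Y x, y⟫_𝕜 = ⟪x, Z y⟫_𝕜) (hbi : Biorthogonal 𝕜 ψ φ)
    (hψ : IsCompleteFamily 𝕜 ψ) :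
    IsLowerBidiagonal Z φ (fun n => conj (c' n)) (fun n => conj (d' n)) := fun m =>
  hψ.ext fun n => by
    rw [← hadj, hY.inner_apply hbi, inner_add_right, inner_smul_right, inner_smul_right,
      hbi n m, hbi n (m + 1)]
    grind

theorem IsUpperBidiagonal.isTridiagonal_adjoint_comp (hX : IsUpperBidiagonal X φ c d)
    (hY : IsUpperBidiagonal Y ψ c' d') (hadj : ∀ x y, ⟪Y x, y⟫_𝕜 = ⟪x, Z y⟫_𝕜)
    (hbi : Biorthogonal 𝕜 ψ φ) :
    IsTridiagonal (Z ∘ₗ X) φ ψ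
      (fun n => c (n - 1) * conj (d' n))
      (fun n => if n = 0 then c 0 * conj (c' 0) else c n * conj (c' n) + d n * conj (d' n))
      (fun n => d (n + 1) * conj (c' n)) := fun n m => by
  rw [LinearMap.comp_apply, ← hadj]
  cases m with
  | zero =>
    rw [hX.apply_zero, inner_smul_right, hY.inner_apply hbi]
    grind
  | succ m =>
    rw [hX.apply_succ, inner_add_right, inner_smul_right, inner_smul_right,
      hY.inner_apply hbi, hY.inner_apply hbi]
    grind

theorem stmt_7_general (hbi : Biorthogonal 𝕜 φ ψ) (hψ : IsCompleteFamily 𝕜 ψ)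
    (hX : IsUpperBidiagonal X φ c d) (hY : IsUpperBidiagonal Y ψ c' d')
    (hadj : ∀ x y, ⟪Y x, y⟫_𝕜 = ⟪x, Z y⟫_𝕜) :
    (∀ n, 1 ≤ n → (Z ∘ₗ X) (φ n) =
      (d n * conj (c' (n - 1))) • φ (n - 1) +
        (c n * conj (c' n) + d n * conj (d' n)) • φ n + (c n * conj (d' (n + 1))) • φ (n + 1)) ∧
    (Z ∘ₗ X) (φ 0) = (c 0 * conj (c' 0)) • φ 0 + (c 0 * conj (d' 1)) • φ 1 ∧
    IsTridiagonal (Z ∘ₗ X) φ ψ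
      (fun n => c (n - 1) * conj (d' n))
      (fun n => if n = 0 then c 0 * conj (c' 0) else c n * conj (c' n) + d n * conj (d' n))
      (fun n => d (n + 1) * conj (c' n)) := by
  have hZ := hY.isLowerBidiagonal_adjoint hadj hbi.symm hψ
  refine ⟨fun n hn => ?_, hZ.comp_apply_zero hX,
    hX.isTridiagonal_adjoint_comp hY hadj hbi.symm⟩
  obtain ⟨n, rfl⟩ := Nat.exists_eq_add_of_le' hn
  exact hZ.comp_apply_succ hX n

end Biorthogonal

/-- With `X φ 0 = c 0 • φ 0`, `X φ n = c n • φ n + d n • φ (n-1)` (`n ≥ 1`),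
`Y ψ 0 = c' 0 • ψ 0`, `Y ψ n = c' n • ψ n + d' n • ψ (n-1)` (`n ≥ 1`), and `(ψ n)` complete,
the operator `H = Y† X` acts as
`H φ n = d n conj (c' (n-1)) • φ (n-1) + (c n conj (c' n) + d n conj (d' n)) • φ n
  + c n conj (d' (n+1)) • φ (n+1)` for `n ≥ 1`,
`H φ 0 = c 0 conj (c' 0) • φ 0 + c 0 conj (d' 1) • φ 1`; in particular `H` is
`(φ,ψ)`-tridiagonal with `a n = c n conj (c' n) + d n conj (d' n)` (`a 0 = c 0 conj (c' 0)`),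
`b' (n-1) = d n conj (c' (n-1))`, `b (n+1) = c n conj (d' (n+1))`. -/
theorem stmt_7 {𝓗 : Type*} [NormedAddCommGroup 𝓗] [InnerProductSpace ℂ 𝓗] [CompleteSpace 𝓗]
    (X Y : 𝓗 →L[ℂ] 𝓗) (φ ψ : ℕ → 𝓗)
    (hbi : ∀ n m : ℕ, ⟪φ n, ψ m⟫ = if n = m then 1 else 0)
    (hcomp : ∀ f : 𝓗, (∀ n : ℕ, ⟪ψ n, f⟫ = 0) → f = 0)
    (c d c' d' : ℕ → ℂ)
    (hX0 : X (φ 0) = c 0 • φ 0)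
    (hX : ∀ n : ℕ, 1 ≤ n → X (φ n) = c n • φ n + d n • φ (n - 1))
    (hY0 : Y (ψ 0) = c' 0 • ψ 0)
    (hY : ∀ n : ℕ, 1 ≤ n → Y (ψ n) = c' n • ψ n + d' n • ψ (n - 1)) :
    (∀ n : ℕ, 1 ≤ n →
      (ContinuousLinearMap.adjoint Y ∘L X) (φ n) =
        (d n * (starRingEnd ℂ) (c' (n - 1))) • φ (n - 1) +
          (c n * (starRingEnd ℂ) (c' n) + d n * (starRingEnd ℂ) (d' n)) • φ n +
          (c n * (starRingEnd ℂ) (d' (n + 1))) • φ (n + 1)) ∧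
    (ContinuousLinearMap.adjoint Y ∘L X) (φ 0) =
      (c 0 * (starRingEnd ℂ) (c' 0)) • φ 0 + (c 0 * (starRingEnd ℂ) (d' 1)) • φ 1 ∧
    (∀ n m : ℕ, ⟪ψ n, (ContinuousLinearMap.adjoint Y ∘L X) (φ m)⟫ =
      (if n = m + 1 then c (n - 1) * (starRingEnd ℂ) (d' n) else 0) +
        (if n = m then
          (if n = 0 then c 0 * (starRingEnd ℂ) (c' 0)
            else c n * (starRingEnd ℂ) (c' n) + d n * (starRingEnd ℂ) (d' n)) else 0) +
        (if m = n + 1 then d (n + 1) * (starRingEnd ℂ) (c' n) else 0)) :=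
  stmt_7_general (X := X.toLinearMap) (Y := Y.toLinearMap) (Z := Y.adjoint.toLinearMap) hbi hcomp
    ⟨hX0, fun n => hX (n + 1) n.succ_pos⟩ ⟨hY0, fun n => hY (n + 1) n.succ_pos⟩
    fun x y => (Y.adjoint_inner_right x y).symm
end

section
/- Let r > 0 and θ ∈ ℝ, and set μ = cosh(2r), a_k = k·μ + sinh²(r), b_k = e^{iθ} cosh(r) sinh(r) √(k(k−1)), and b'_k = e^{−iθ} cosh(r) sinh(r) √((k+1)(k+2)) for k ∈ ℕ. Let p : ℕ → ℂ satisfy p(0) = 1, p(1) = 0, and p(k+2) = (1/b'_k) · ( −a_k p(k) − b_k p(k−2) ) for all k ≥ 0, with the convention that the term b_k p(k−2) is 0 when k < 2. Then for every k ∈ ℕ: p(2k) = ( −e^{iθ} tanh(r)/2 )^k · √((2k)!)/k! and p(2k+1) = 0. -/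
/-!
Let `a`, `a†` be the ladder operators on coefficient sequences and put
`c = cosh r · a + e^{iθ} sinh r · a†`. The three-term recurrence says `c† c p = 0`. Since `p 1 = 0`,
the sequence `c p` vanishes at `0`; a sequence killed by `c†` is determined by its value at `0`, so
already `c p = 0`. This is a recurrence with two terms, which is solved by a product.
-/

open Finset

section Bogoliubov

/-- The Bogoliubov combination `α a + β a†` of the ladder operators with weights `w`, where
`(a p) n = w (n + 1) p (n + 1)` and `(a† p) n = w n p (n - 1)`, acting on coefficient sequences.
The weights are meant to satisfy `w 0 = 0`, so that the truncated `p (0 - 1)` does not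
contribute. -/
def bogoliubov {R : Type*} [CommSemiring R] (w : ℕ → R) (α β : R) (p : ℕ → R) (n : ℕ) : R :=
  α * w (n + 1) * p (n + 1) + β * w n * p (n - 1)

lemma bogoliubov_bogoliubov {R : Type*} [CommSemiring R] {w : ℕ → R} (hw₀ : w 0 = 0)
    (α β γ δ : R) (p : ℕ → R) (n : ℕ) :
    bogoliubov w γ δ (bogoliubov w α β p) n =
      γ * α * (w (n + 1) * w (n + 2)) * p (n + 2) +
        (γ * β * w (n + 1) ^ 2 + δ * α * w n ^ 2) * p n +
        δ * β * (w n * w (n - 1)) * p (n - 2) := by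
  cases n with
  | zero => simp only [bogoliubov, hw₀, Nat.add_sub_cancel]; ring
  | succ n =>
    simp only [bogoliubov, Nat.add_sub_cancel, Nat.reduceSubDiff]
    ring

variable {K : Type*} [Field K] {w : ℕ → K} {α β γ δ : K} {p : ℕ → K}

lemma apply_add_two_of_bogoliubov_eq_zero (hw : ∀ n, w (n + 1) ≠ 0) (hα : α ≠ 0)
    (hp : bogoliubov w α β p = 0) (n : ℕ) :
    p (n + 2) = -(β / α) * (w (n + 1) / w (n + 2)) * p n := by
  have hn : α * w (n + 2) * p (n + 2) + β * w (n + 1) * p n = 0 := congrFun hp (n + 1)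
  have hw₂ : w (n + 2) ≠ 0 := hw (n + 1)
  field_simp
  linear_combination hn

lemma apply_two_mul_of_bogoliubov_eq_zero (hw : ∀ n, w (n + 1) ≠ 0) (hα : α ≠ 0)
    (hp : bogoliubov w α β p = 0) (k : ℕ) :
    p (2 * k) = (-(β / α)) ^ k * (∏ i ∈ range k, w (2 * i + 1) / w (2 * i + 2)) * p 0 := by
  induction k with
  | zero => simp
  | succ k ih =>
    rw [mul_add_one, apply_add_two_of_bogoliubov_eq_zero hw hα hp, ih, prod_range_succ]
    ring

lemma apply_two_mul_add_one_of_bogoliubov_eq_zero (hw₀ : w 0 = 0) (hw : ∀ n, w (n + 1) ≠ 0)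
    (hα : α ≠ 0) (hp : bogoliubov w α β p = 0) (k : ℕ) : p (2 * k + 1) = 0 := by
  induction k with
  | zero => simpa [bogoliubov, hw₀, hα, hw 0] using congrFun hp 0
  | succ k ih =>
    rw [mul_add_one, add_right_comm, apply_add_two_of_bogoliubov_eq_zero hw hα hp, ih, mul_zero]

lemma eq_zero_of_bogoliubov_eq_zero (hw₀ : w 0 = 0) (hw : ∀ n, w (n + 1) ≠ 0) (hα : α ≠ 0)
    (hp : bogoliubov w α β p = 0) (hp₀ : p 0 = 0) : p = 0 := by
  funext n
  obtain ⟨k, rfl | rfl⟩ := n.even_or_odd'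
  · rw [apply_two_mul_of_bogoliubov_eq_zero hw hα hp, hp₀, mul_zero, Pi.zero_apply]
  · exact apply_two_mul_add_one_of_bogoliubov_eq_zero hw₀ hw hα hp k

lemma bogoliubov_eq_zero_of_bogoliubov_bogoliubov_eq_zero (hw₀ : w 0 = 0)
    (hw : ∀ n, w (n + 1) ≠ 0) (hγ : γ ≠ 0) (hp₁ : p 1 = 0)
    (hp : bogoliubov w γ δ (bogoliubov w α β p) = 0) : bogoliubov w α β p = 0 :=
  eq_zero_of_bogoliubov_eq_zero hw₀ hw hγ hp (by simp [bogoliubov, hw₀, hp₁])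

end Bogoliubov

section BosonicWeight

/-- The matrix elements `√n` of the bosonic ladder operators in the number basis, valued in `ℂ`
like the expansion coefficients they act on. -/
noncomputable def bosonicWeight (n : ℕ) : ℂ := √(n : ℝ)

lemma bosonicWeight_zero : bosonicWeight 0 = 0 := by simp [bosonicWeight]

lemma bosonicWeight_succ_ne_zero (n : ℕ) : bosonicWeight (n + 1) ≠ 0 :=
  Complex.ofReal_ne_zero.2 (Real.sqrt_ne_zero'.2 (by positivity))

lemma bosonicWeight_sq (n : ℕ) : bosonicWeight n ^ 2 = n := by
  rw [bosonicWeight, ← Complex.ofReal_pow, Real.sq_sqrt n.cast_nonneg, Complex.ofReal_natCast]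

lemma bosonicWeight_mul (m n : ℕ) : bosonicWeight m * bosonicWeight n = bosonicWeight (m * n) := by
  rw [bosonicWeight, bosonicWeight, bosonicWeight, ← Complex.ofReal_mul,
    ← Real.sqrt_mul m.cast_nonneg, Nat.cast_mul]

lemma prod_bosonicWeight_odd_div_even (k : ℕ) :
    ∏ i ∈ range k, bosonicWeight (2 * i + 1) / bosonicWeight (2 * i + 2) =
      bosonicWeight (2 * k).factorial / (2 ^ k * k.factorial) := by
  induction k with
  | zero => simp [bosonicWeight]
  | succ k ih =>
    have hw : bosonicWeight (2 * k + 2) ≠ 0 := bosonicWeight_succ_ne_zero _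
    have hsq : bosonicWeight (2 * k + 2) ^ 2 = 2 * (k + 1) := by
      rw [bosonicWeight_sq]; push_cast; ring
    have hk : (k : ℂ) + 1 ≠ 0 := k.cast_add_one_ne_zero
    have hfact : (k.factorial : ℂ) ≠ 0 := Nat.cast_ne_zero.2 k.factorial_ne_zero
    rw [prod_range_succ, ih, mul_add_one, Nat.factorial_succ (2 * k + 1),
      Nat.factorial_succ (2 * k), ← bosonicWeight_mul, ← bosonicWeight_mul, Nat.factorial_succ k,
      Nat.cast_mul, Nat.cast_succ]
    field_simp
    rw [hsq]
    ring

lemma apply_two_mul_of_bogoliubov_bosonicWeight_eq_zero {α β : ℂ} {p : ℕ → ℂ} (hα : α ≠ 0)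
    (hp : bogoliubov bosonicWeight α β p = 0) (k : ℕ) :
    p (2 * k) = (-(β / α) / 2) ^ k * √((2 * k).factorial : ℝ) / k.factorial * p 0 := by
  rw [apply_two_mul_of_bogoliubov_eq_zero bosonicWeight_succ_ne_zero hα hp,
    prod_bosonicWeight_odd_div_even, bosonicWeight, div_pow _ (2 : ℂ)]
  ring

-- For real `c`, `s` and `|z| = 1` the outer operator is the adjoint of the inner one.
lemma bogoliubov_bogoliubov_bosonicWeight (c s : ℂ) {z : ℂ} (hz : z ≠ 0) (p : ℕ → ℂ) (n : ℕ) :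
    bogoliubov bosonicWeight (z⁻¹ * s) c (bogoliubov bosonicWeight c (z * s) p) n =
      z⁻¹ * c * s * √(((n : ℝ) + 1) * ((n : ℝ) + 2)) * p (n + 2) +
        (n * (c ^ 2 + s ^ 2) + s ^ 2) * p n +
        if n < 2 then 0 else z * c * s * √((n : ℝ) * ((n : ℝ) - 1)) * p (n - 2) := by
  have hup : bosonicWeight (n + 1) * bosonicWeight (n + 2) =
      √(((n : ℝ) + 1) * ((n : ℝ) + 2)) := by
    rw [bosonicWeight_mul, bosonicWeight]; push_cast; rfl
  have hdown : c * (z * s) * (bosonicWeight n * bosonicWeight (n - 1)) * p (n - 2) =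
      if n < 2 then 0 else z * c * s * √((n : ℝ) * ((n : ℝ) - 1)) * p (n - 2) := by
    split_ifs with hn
    · interval_cases n <;> simp [bosonicWeight_zero]
    · rw [bosonicWeight_mul, bosonicWeight, Nat.cast_mul, Nat.cast_pred (by lia)]
      ring
  rw [bogoliubov_bogoliubov bosonicWeight_zero, hup, hdown, bosonicWeight_sq, bosonicWeight_sq]
  push_cast
  field_simp
  ring

end BosonicWeight

/-- For `r > 0`, `θ ∈ ℝ`, with `a k = k cosh(2r) + sinh²(r)`,
`b k = e^{iθ} cosh(r) sinh(r) √(k(k-1))`, `b' k = e^{-iθ} cosh(r) sinh(r) √((k+1)(k+2))`,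
if `p 0 = 1`, `p 1 = 0`, and `p (k+2) = (1/b' k)(-a k · p k - b k · p (k-2))` (the last term
being `0` when `k < 2`), then `p (2k) = (-e^{iθ} tanh(r)/2)^k √((2k)!)/k!` and
`p (2k+1) = 0`. -/
theorem stmt_19 (r θ : ℝ) (hr : 0 < r) (p : ℕ → ℂ)
    (hp0 : p 0 = 1) (hp1 : p 1 = 0)
    (hrec : ∀ k : ℕ, p (k + 2) =
      (1 / (Complex.exp (-(θ : ℂ) * Complex.I) * (Real.cosh r : ℂ) * (Real.sinh r : ℂ) *
          (Real.sqrt (((k : ℝ) + 1) * ((k : ℝ) + 2)) : ℂ))) *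
        (-(((k : ℂ) * (Real.cosh (2 * r) : ℂ) + (Real.sinh r : ℂ) ^ 2)) * p k -
          (if k < 2 then 0 else
            Complex.exp ((θ : ℂ) * Complex.I) * (Real.cosh r : ℂ) * (Real.sinh r : ℂ) *
              (Real.sqrt ((k : ℝ) * ((k : ℝ) - 1)) : ℂ) * p (k - 2)))) :
    ∀ k : ℕ,
      p (2 * k) =
          (-(Complex.exp ((θ : ℂ) * Complex.I) * (Real.tanh r : ℂ)) / 2) ^ k *
            (Real.sqrt (Nat.factorial (2 * k)) : ℂ) / (Nat.factorial k : ℂ) ∧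
        p (2 * k + 1) = 0 := by
  have hs : (Real.sinh r : ℂ) ≠ 0 := Complex.ofReal_ne_zero.2 (Real.sinh_pos_iff.2 hr).ne'
  have hc : (Real.cosh r : ℂ) ≠ 0 := Complex.ofReal_ne_zero.2 (Real.cosh_pos r).ne'
  set z := Complex.exp (θ * Complex.I)
  have hz : z ≠ 0 := Complex.exp_ne_zero _
  have hfactor : bogoliubov bosonicWeight (z⁻¹ * Real.sinh r) (Real.cosh r)
      (bogoliubov bosonicWeight (Real.cosh r) (z * Real.sinh r) p) = 0 := by
    funext n
    have hsqrt : (√(((n : ℝ) + 1) * ((n : ℝ) + 2)) : ℂ) ≠ 0 :=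
      Complex.ofReal_ne_zero.2 (Real.sqrt_ne_zero'.2 (by positivity))
    rw [bogoliubov_bogoliubov_bosonicWeight _ _ hz, hrec, neg_mul, Complex.exp_neg,
      Real.cosh_two_mul, ← mul_assoc, mul_one_div_cancel (by positivity), Pi.zero_apply]
    push_cast
    ring
  have hker := bogoliubov_eq_zero_of_bogoliubov_bogoliubov_eq_zero bosonicWeight_zero
    bosonicWeight_succ_ne_zero (mul_ne_zero (inv_ne_zero hz) hs) hp1 hfactor
  refine fun k ↦ ⟨?_, apply_two_mul_add_one_of_bogoliubov_eq_zero bosonicWeight_zero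
    bosonicWeight_succ_ne_zero hc hker k⟩
  rw [apply_two_mul_of_bogoliubov_bosonicWeight_eq_zero hc hker, hp0, mul_one,
    Real.tanh_eq_sinh_div_cosh, Complex.ofReal_div, mul_div_assoc z]
end
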